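/- Let r : X → X be a retraction of a topological space X with range Z = r(X). If X is normal, Z is a T1 subspace, and every fiber r⁻¹(z) (z ∈ Z) is vacuously normal as a subspace, then r (viewed as a map from X onto Z) is a closed map. -/

import Mathlib

/-!
Each fiber `r ⁻¹' {y}`, `y ∈ Z`, is closed in `X`, so it contains the closure of `{y}`; being
vacuously normal, each of its nonempty closed subsets meets that closure. Let `F` be closed and
`z ∈ Z \ r(F)`. Normality separates `r ⁻¹' {z}` and `F` by disjoint open sets `U` and `V`. If
`y ∈ r(F)`, then `F` meets the closure of `{y}`, so the open set `V ⊇ F` contains `y`. Hence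
`r(F) ⊆ V`, and `U ∩ Z` is a neighbourhood of `z` in `Z` that misses `r(F)`.
-/

/-- A space is vacuously normal if it contains no pair of disjoint
nonempty closed subsets. -/
def VacuouslyNormal (X : Type*) [TopologicalSpace X] : Prop :=
  ∀ F H : Set X, IsClosed F → IsClosed H → F.Nonempty → H.Nonempty → ¬ Disjoint F H

theorem closedMap_of_normal_retraction_with_vacuouslyNormal_fibers
    (X : Type*) [TopologicalSpace X] (r : X → X)
    (hcont : Continuous r) (hretr : r ∘ r = r)
    (hX : NormalSpace X) (hT1 : T1Space (Set.range r))
    (hfib : ∀ z ∈ Set.range r, VacuouslyNormal (r ⁻¹' {z})) :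
    IsClosedMap (Set.rangeFactorization r) := by
  have hrr : ∀ x, r (r x) = r x := fun x => congrFun hretr x
  have hfac : Continuous (Set.rangeFactorization r) := hcont.subtype_mk _
  have hclosed : ∀ z ∈ Set.range r, IsClosed (r ⁻¹' {z}) := by
    intro z hz
    have h := (isClosed_singleton (x := (⟨z, hz⟩ : Set.range r))).preimage hfac
    convert h using 1
    ext x
    simp [Set.rangeFactorization, Subtype.ext_iff]
  have hmeet : ∀ F : Set X, IsClosed F → ∀ x ∈ F, (F ∩ closure {r x}).Nonempty := by
    intro F hF x hx
    by_contra hne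
    refine hfib (r x) ⟨x, rfl⟩ (Subtype.val ⁻¹' F) (Subtype.val ⁻¹' closure {r x})
      (hF.preimage continuous_subtype_val) (isClosed_closure.preimage continuous_subtype_val)
      ⟨⟨x, rfl⟩, hx⟩ ⟨⟨r x, hrr x⟩, subset_closure rfl⟩ ?_
    exact Set.disjoint_left.2 fun p hp hq => hne ⟨p, hp, hq⟩
  intro F hF
  rw [← isOpen_compl_iff, isOpen_iff_forall_mem_open]
  rintro ⟨z, hz⟩ hzF
  have hdisj : Disjoint (r ⁻¹' {z}) F :=
    Set.disjoint_left.2 fun x hx hxF => hzF ⟨x, hxF, Subtype.ext hx⟩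
  obtain ⟨U, V, hU, hV, hPU, hFV, hUV⟩ := normal_separation (hclosed z hz) hF hdisj
  refine ⟨Subtype.val ⁻¹' U, ?_, hU.preimage continuous_subtype_val, ?_⟩
  · rintro _ hyU ⟨x, hxF, rfl⟩
    obtain ⟨p, hpF, hp⟩ := hmeet F hF x hxF
    obtain ⟨q, hqV, hq⟩ := mem_closure_iff.1 hp V hV (hFV hpF)
    rw [Set.mem_singleton_iff.1 hq] at hqV
    exact Set.disjoint_left.1 hUV hyU hqV
  · obtain ⟨x, rfl⟩ := hz
    exact hPU (hrr x)
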